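/- Let b ≥ 2 be an integer and define g : {−1,1}^{b−1} → ℤ by g(σ) = σ₁ + Σ_{i=1}^{b−2} σᵢσᵢ₊₁ − σ_{b−1}. Then the sum of the total magnetization Σ_{i=1}^{b−1} σᵢ over all maximizers of g equals 0. -/

import Mathlib

/-- The first interior spin `σ₁` of a block configuration `σ : {−1,1}^{b−1}`
(interior sites `1, …, b−1` are indexed by `Fin (b−1)`, site `i` ↦ index `i−1`). -/
def firstSpin (b : ℕ) (σ : Fin (b - 1) → ℤ) : ℤ :=
  if h : 0 < b - 1 then σ ⟨0, h⟩ else 0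

/-- The last interior spin `σ_{b−1}` of a block configuration. -/
def lastSpin (b : ℕ) (σ : Fin (b - 1) → ℤ) : ℤ :=
  if h : b - 2 < b - 1 then σ ⟨b - 2, h⟩ else 0

/-- The interior bond sum `Σ_{i=1}^{b−2} σᵢ σᵢ₊₁` of a block configuration. -/
def bondSum (b : ℕ) (σ : Fin (b - 1) → ℤ) : ℤ :=
  ∑ i : Fin (b - 1), if h : (i : ℕ) + 1 < b - 1 then σ i * σ ⟨(i : ℕ) + 1, h⟩ else 0

/-! Reflecting the block swaps the boundary spins `σ₀ = +1`, `σ_b = −1`, and flipping every spin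
swaps them back. The composite therefore preserves the energy and permutes the maximizers, but it
negates the magnetization, so the sum equals its own negative. -/

section InvariantSums

variable {α β M : Type*} {s : Set α} {e : α → α}

lemma bijOn_setOf_isMaxOn [Preorder β] {g : α → β} (he : Set.BijOn e s s)
    (hg : ∀ x ∈ s, g (e x) = g x) :
    Set.BijOn e {x ∈ s | IsMaxOn g s x} {x ∈ s | IsMaxOn g s x} := by
  refine ⟨fun x ⟨hx, hmax⟩ ↦ ⟨he.mapsTo hx, fun y hy ↦ ?_⟩, he.injOn.mono (Set.sep_subset _ _), ?_⟩
  · exact (hmax hy).trans_eq (hg x hx).symm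
  · rintro y ⟨hy, hmax⟩
    obtain ⟨x, hx, rfl⟩ := he.surjOn hy
    exact ⟨x, ⟨hx, fun z hz ↦ (hmax hz).trans_eq (hg x hx)⟩, rfl⟩

lemma finsum_mem_eq_zero_of_bijOn_of_neg [AddCommGroup M] [IsAddTorsionFree M] {f : α → M}
    (he : Set.BijOn e s s) (hf : ∀ x ∈ s, f (e x) = -f x) : ∑ᶠ x ∈ s, f x = 0 := by
  refine neg_eq_self.mp ?_
  calc -∑ᶠ x ∈ s, f x = ∑ᶠ x ∈ s, -f x := by simp only [← finsum_neg_distrib]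
    _ = ∑ᶠ x ∈ s, f x := finsum_mem_eq_of_bijOn e he fun x hx ↦ (hf x hx).symm

end InvariantSums

/-- The configurations of `±1` spins on `n` sites, as a set of integer-valued functions. -/
def spinConfigs (n : ℕ) : Set (Fin n → ℤ) := {σ | ∀ i, σ i = 1 ∨ σ i = -1}

/-- The block energy sum `g(σ) = σ₁ + Σ_{i=1}^{b−2} σᵢσᵢ₊₁ − σ_{b−1}` between boundary spins
`σ₀ = 1` and `σ_b = −1`. -/
def plusMinusEnergy (b : ℕ) (σ : Fin (b - 1) → ℤ) : ℤ := firstSpin b σ + bondSum b σ - lastSpin b σ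

/-- The symmetry `σᵢ ↦ -σ_{n+1-i}` of a chain of `n` sites: spatial reflection composed with a
global spin flip. -/
def reflectFlip {n : ℕ} {R : Type*} [Neg R] (σ : Fin n → R) : Fin n → R := fun i ↦ -σ i.rev

lemma reflectFlip_involutive {n : ℕ} {R : Type*} [InvolutiveNeg R] :
    Function.Involutive (reflectFlip : (Fin n → R) → Fin n → R) := fun σ ↦
  funext fun i ↦ by simp [reflectFlip]

lemma sum_reflectFlip {n : ℕ} {R : Type*} [SubtractionCommMonoid R] (σ : Fin n → R) :
    ∑ i, reflectFlip σ i = -∑ i, σ i :=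
  calc ∑ i : Fin n, -σ i.rev = -∑ i : Fin n, σ i.rev := Finset.sum_neg_distrib _
    _ = -∑ i, σ i := congrArg Neg.neg (Equiv.sum_comp Fin.revPerm σ)

lemma mapsTo_reflectFlip_spinConfigs (n : ℕ) :
    Set.MapsTo reflectFlip (spinConfigs n) (spinConfigs n) := fun σ hσ i ↦
  (hσ i.rev).symm.imp (fun h ↦ by simp [reflectFlip, h]) (fun h ↦ by simp [reflectFlip, h])

lemma bijOn_reflectFlip_spinConfigs (n : ℕ) :
    Set.BijOn reflectFlip (spinConfigs n) (spinConfigs n) :=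
  have hinv := reflectFlip_involutive.leftInverse.leftInvOn (spinConfigs n)
  Set.InvOn.bijOn ⟨hinv, hinv⟩ (mapsTo_reflectFlip_spinConfigs n) (mapsTo_reflectFlip_spinConfigs n)

lemma firstSpin_reflectFlip (b : ℕ) (σ : Fin (b - 1) → ℤ) :
    firstSpin b (reflectFlip σ) = -lastSpin b σ := by
  obtain _ | _ | n := b <;> simp [firstSpin, lastSpin, reflectFlip, Fin.rev]

lemma lastSpin_reflectFlip (b : ℕ) (σ : Fin (b - 1) → ℤ) :
    lastSpin b (reflectFlip σ) = -firstSpin b σ := by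
  rw [← neg_eq_iff_eq_neg, ← firstSpin_reflectFlip, reflectFlip_involutive]

lemma bondSum_add_two (n : ℕ) (σ : Fin (n + 1) → ℤ) :
    bondSum (n + 2) σ = ∑ i : Fin n, σ i.castSucc * σ i.succ := by
  unfold bondSum
  exact (Fin.sum_univ_castSucc _).trans (by simp [Fin.succ])

lemma bondSum_reflectFlip (b : ℕ) (σ : Fin (b - 1) → ℤ) :
    bondSum b (reflectFlip σ) = bondSum b σ := by
  obtain _ | _ | n := b
  · simp [bondSum]
  · simp [bondSum]
  · calc bondSum (n + 2) (reflectFlip σ)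
        = ∑ i : Fin n, σ i.rev.castSucc * σ i.rev.succ := by
          rw [bondSum_add_two]
          simp [reflectFlip, Fin.rev_castSucc, Fin.rev_succ, mul_comm]
      _ = ∑ i : Fin n, σ i.castSucc * σ i.succ :=
          Equiv.sum_comp Fin.revPerm fun i : Fin n ↦ σ i.castSucc * σ i.succ
      _ = bondSum (n + 2) σ := (bondSum_add_two n σ).symm

lemma plusMinusEnergy_reflectFlip (b : ℕ) (σ : Fin (b - 1) → ℤ) :
    plusMinusEnergy b (reflectFlip σ) = plusMinusEnergy b σ := by
  simp only [plusMinusEnergy, firstSpin_reflectFlip, bondSum_reflectFlip, lastSpin_reflectFlip]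
  ring

/-- **Zero total magnetization over the `+/−` maximizers.**  For `b ≥ 2` and
`g(σ) = σ₁ + Σ_{i=1}^{b−2} σᵢσᵢ₊₁ − σ_{b−1}` on `{−1,1}^{b−1}`, the sum of the
total magnetization `Σ_{i=1}^{b−1} σᵢ` over all maximizers of `g` equals `0`. -/
theorem plus_minus_maximizers_magnetization (b : ℕ) (hb : 2 ≤ b) :
    (∑ᶠ σ ∈ {σ : Fin (b - 1) → ℤ | (∀ i, σ i = 1 ∨ σ i = -1) ∧
        ∀ τ : Fin (b - 1) → ℤ, (∀ i, τ i = 1 ∨ τ i = -1) →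
          firstSpin b τ + bondSum b τ - lastSpin b τ ≤
            firstSpin b σ + bondSum b σ - lastSpin b σ},
      ∑ i : Fin (b - 1), σ i) = 0 := by
  have hmax := bijOn_setOf_isMaxOn (bijOn_reflectFlip_spinConfigs (b - 1))
    fun σ _ ↦ plusMinusEnergy_reflectFlip b σ
  exact finsum_mem_eq_zero_of_bijOn_of_neg hmax fun σ _ ↦ sum_reflectFlip σ
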